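/- arXiv:2505.19371 — 2 statements merged into one kernel-verified Lean document; each statement's English description precedes it below -/
import Mathlib

section
/- Let V ≥ 3, let p ∈ Δ_V have entries sorted in non-increasing order, let φ be primal valid, and let λ ≥ 0. Define cost(k) = min_{q ∈ Δ_k} [ Σ_{j=1}^k d_φ(q_j, p_j) + Σ_{j=k+1}^V d_φ(0, p_j) ] + λk for k ∈ {1,…,V}. Then cost is discretely convex in k: for every k ∈ {2,…,V−1}, cost(k+1) − 2·cost(k) + cost(k−1) ≥ 0. -/
/-!
The argument is an exchange on feasible points, so no minimizers are needed. Write `k = m + 1`, and let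
`a = m`, `b = m + 1` be the two coordinates in which the supports for `k - 1`, `k`, `k + 1` differ.
Given `u` feasible for `k + 1` and `w` feasible for `k - 1`, put `α = u a`, `β = u b` and choose
`t ∈ [0, 1]` with `(1 - t) (α + β) = α`. On the first `m` coordinates the mixtures
`t w + (1 - t) u` and `(1 - t) w + t u` have sums `1 - α` and `1 - β`; completing them by `α` and `β`
at coordinate `a` gives two points feasible for `k`. By convexity the mixtures together cost no more than
`u` and `w` on the first `m` coordinates (`breg_mix_le`). Moving the mass `β` from `b` to `a` does not
increase the cost, because `φ'` is monotone and `p b ≤ p a` (`breg_swap_le`). Hence twice the loss at `k`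
is at most the sum of any two values at `k + 1` and `k - 1` (`two_mul_primalTopLoss_le`), and one takes
infima. The term `λ k` is affine and drops out of the second difference.
-/

open Finset Set Filter

/-- One-dimensional Bregman divergence `d_φ(x,y) = φ(x) − φ(y) − φ'(y)(x−y)`,
with the derivative `φ'` given explicitly. -/
noncomputable def breg (φ φ' : ℝ → ℝ) (x y : ℝ) : ℝ := φ x - φ y - φ' y * (x - y)

/-- The unregularized primal loss of keeping the top-`n` coordinates `{0,…,n−1}` of `p`:
the infimum over probability vectors supported on the first `n` coordinates of
`Σ_{j<n} d_φ(q_j, p_j) + Σ_{j≥n} d_φ(0, p_j)`. -/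
noncomputable def primalTopLoss {V : ℕ} (φ φ' : ℝ → ℝ) (p : Fin V → ℝ) (n : ℕ) : ℝ :=
  sInf {r : ℝ | ∃ q : Fin V → ℝ, (∀ i, q i ∈ Set.Icc (0:ℝ) 1) ∧
    ((∑ i ∈ Finset.univ.filter (fun i : Fin V => (i : ℕ) < n), q i) = 1) ∧
    r = (∑ i ∈ Finset.univ.filter (fun i : Fin V => (i : ℕ) < n), breg φ φ' (q i) (p i)) +
        ∑ i ∈ Finset.univ.filter (fun i : Fin V => n ≤ (i : ℕ)), breg φ φ' 0 (p i)}

/-- The `ℓ₀`-regularized primal cost `cost(n) = min_{q ∈ Δ_n} D_φ((q,0),p) + λ·n`. -/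
noncomputable def primalCost {V : ℕ} (φ φ' : ℝ → ℝ) (p : Fin V → ℝ) (lam : ℝ) (n : ℕ) : ℝ :=
  primalTopLoss φ φ' p n + lam * (n : ℝ)

/-- The tangent line inequality: a Bregman divergence of a convex function is nonnegative. -/
lemma breg_nonneg {φ φ' : ℝ → ℝ} (hconv : ConvexOn ℝ (Set.Icc 0 1) φ)
    (hderiv : ∀ x ∈ Set.Icc (0:ℝ) 1, HasDerivWithinAt φ (φ' x) (Set.Icc 0 1) x)
    {x y : ℝ} (hx : x ∈ Set.Icc (0:ℝ) 1) (hy : y ∈ Set.Icc (0:ℝ) 1) : 0 ≤ breg φ φ' x y := by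
  unfold breg
  rcases lt_trichotomy x y with h | h | h
  · have := hconv.slope_le_of_hasDerivWithinAt hx hy h (hderiv y hy)
    rw [slope_def_field, div_le_iff₀ (by linarith)] at this
    linarith
  · subst h; simp
  · have := hconv.le_slope_of_hasDerivWithinAt hy hx h (hderiv y hy)
    rw [slope_def_field, le_div_iff₀ (by linarith)] at this
    linarith

/-- Mass `β` is placed more cheaply on the coordinate with the larger reference value. -/
lemma breg_swap_le {φ φ' : ℝ → ℝ} (hconv : ConvexOn ℝ (Set.Icc 0 1) φ)
    (hderiv : ∀ x ∈ Set.Icc (0:ℝ) 1, HasDerivWithinAt φ (φ' x) (Set.Icc 0 1) x)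
    {y z β : ℝ} (hy : y ∈ Set.Icc (0:ℝ) 1) (hz : z ∈ Set.Icc (0:ℝ) 1) (hzy : z ≤ y)
    (hβ : 0 ≤ β) :
    breg φ φ' β y + breg φ φ' 0 z ≤ breg φ φ' β z + breg φ φ' 0 y := by
  have hmono : φ' z ≤ φ' y := by
    rcases hzy.eq_or_lt with h | h
    · rw [h]
    · -- adding the two tangent line inequalities gives `0 ≤ (φ' y - φ' z) * (y - z)`
      have h1 := breg_nonneg hconv hderiv hy hz
      have h2 := breg_nonneg hconv hderiv hz hy
      unfold breg at h1 h2
      by_contra! hc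
      nlinarith [mul_pos (sub_pos.2 h) (sub_pos.2 hc)]
  unfold breg
  nlinarith [mul_le_mul_of_nonneg_right hmono hβ]

/-- Two complementary mixtures of `x` and `z` cost together at most as much as `x` and `z`. -/
lemma breg_mix_le {φ φ' : ℝ → ℝ} (hconv : ConvexOn ℝ (Set.Icc 0 1) φ)
    {x z y t : ℝ} (hx : x ∈ Set.Icc (0:ℝ) 1) (hz : z ∈ Set.Icc (0:ℝ) 1)
    (ht0 : 0 ≤ t) (ht1 : t ≤ 1) :
    breg φ φ' (t * x + (1 - t) * z) y + breg φ φ' ((1 - t) * x + t * z) y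
      ≤ breg φ φ' x y + breg φ φ' z y := by
  have h1 := hconv.2 hx hz ht0 (sub_nonneg.2 ht1) (by ring)
  have h2 := hconv.2 hx hz (sub_nonneg.2 ht1) ht0 (by ring)
  simp only [smul_eq_mul] at h1 h2
  unfold breg
  linarith

lemma mix_mem {x z t : ℝ} (hx : x ∈ Set.Icc (0:ℝ) 1) (hz : z ∈ Set.Icc (0:ℝ) 1)
    (ht0 : 0 ≤ t) (ht1 : t ≤ 1) : t * x + (1 - t) * z ∈ Set.Icc (0:ℝ) 1 :=
  convex_Icc (0:ℝ) 1 hx hz ht0 (sub_nonneg.2 ht1) (by ring)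

/-- The set of objective values whose infimum is `primalTopLoss φ φ' p n`. -/
def topValues {V : ℕ} (φ φ' : ℝ → ℝ) (p : Fin V → ℝ) (n : ℕ) : Set ℝ :=
  {r : ℝ | ∃ q : Fin V → ℝ, (∀ i, q i ∈ Set.Icc (0:ℝ) 1) ∧
    ((∑ i ∈ Finset.univ.filter (fun i : Fin V => (i : ℕ) < n), q i) = 1) ∧
    r = (∑ i ∈ Finset.univ.filter (fun i : Fin V => (i : ℕ) < n), breg φ φ' (q i) (p i)) +
        ∑ i ∈ Finset.univ.filter (fun i : Fin V => n ≤ (i : ℕ)), breg φ φ' 0 (p i)}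

lemma topValues_bddBelow {V : ℕ} {φ φ' : ℝ → ℝ} {p : Fin V → ℝ}
    (hp0 : ∀ i, p i ∈ Set.Icc (0:ℝ) 1) (hconv : ConvexOn ℝ (Set.Icc 0 1) φ)
    (hderiv : ∀ x ∈ Set.Icc (0:ℝ) 1, HasDerivWithinAt φ (φ' x) (Set.Icc 0 1) x) (n : ℕ) :
    BddBelow (topValues φ φ' p n) := by
  refine ⟨0, ?_⟩
  rintro r ⟨q, hq, -, rfl⟩
  exact add_nonneg (Finset.sum_nonneg fun i _ => breg_nonneg hconv hderiv (hq i) (hp0 i))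
    (Finset.sum_nonneg fun i _ => breg_nonneg hconv hderiv (by simp) (hp0 i))

lemma topValues_nonempty {V : ℕ} (φ φ' : ℝ → ℝ) (p : Fin V → ℝ) {n : ℕ} (hV : 0 < V)
    (hn : 0 < n) : (topValues φ φ' p n).Nonempty := by
  refine ⟨_, fun i => if i = ⟨0, hV⟩ then 1 else 0, fun i => ?_, ?_, rfl⟩
  · dsimp only
    split_ifs <;> simp
  · rw [Finset.sum_ite_eq', if_pos (by simpa using hn)]

lemma sum_filter_lt_succ {V m : ℕ} (hm : m < V) (f : Fin V → ℝ) :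
    ∑ i ∈ Finset.univ.filter (fun i : Fin V => (i : ℕ) < m + 1), f i
      = (∑ i ∈ Finset.univ.filter (fun i : Fin V => (i : ℕ) < m), f i) + f ⟨m, hm⟩ := by
  have : Finset.univ.filter (fun i : Fin V => (i : ℕ) < m + 1)
      = insert ⟨m, hm⟩ (Finset.univ.filter (fun i : Fin V => (i : ℕ) < m)) := by
    ext i; simp [Fin.ext_iff]; omega
  rw [this, Finset.sum_insert (by simp), add_comm]

lemma sum_filter_ge {V m : ℕ} (hm : m < V) (f : Fin V → ℝ) :
    ∑ i ∈ Finset.univ.filter (fun i : Fin V => m ≤ (i : ℕ)), f i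
      = f ⟨m, hm⟩ + ∑ i ∈ Finset.univ.filter (fun i : Fin V => m + 1 ≤ (i : ℕ)), f i := by
  have : Finset.univ.filter (fun i : Fin V => m ≤ (i : ℕ))
      = insert ⟨m, hm⟩ (Finset.univ.filter (fun i : Fin V => m + 1 ≤ (i : ℕ))) := by
    ext i; simp [Fin.ext_iff]; omega
  rw [this, Finset.sum_insert (by simp)]

/-- A point of the box whose first `m` coordinates sum to `1 - γ` becomes, after setting coordinate `m`
to `γ`, feasible for `m + 1`; this bounds the loss at `m + 1`. -/
lemma primalTopLoss_succ_le {V m : ℕ} {φ φ' : ℝ → ℝ} {p : Fin V → ℝ}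
    (hp0 : ∀ i, p i ∈ Set.Icc (0:ℝ) 1) (hconv : ConvexOn ℝ (Set.Icc 0 1) φ)
    (hderiv : ∀ x ∈ Set.Icc (0:ℝ) 1, HasDerivWithinAt φ (φ' x) (Set.Icc 0 1) x)
    (hm : m < V) (q : Fin V → ℝ) (hq : ∀ i, q i ∈ Set.Icc (0:ℝ) 1) {γ : ℝ}
    (hγ : γ ∈ Set.Icc (0:ℝ) 1)
    (hsum : (∑ i ∈ Finset.univ.filter (fun i : Fin V => (i : ℕ) < m), q i) + γ = 1) :
    primalTopLoss φ φ' p (m + 1) ≤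
      (∑ i ∈ Finset.univ.filter (fun i : Fin V => (i : ℕ) < m), breg φ φ' (q i) (p i))
        + breg φ φ' γ (p ⟨m, hm⟩)
        + ∑ i ∈ Finset.univ.filter (fun i : Fin V => m + 1 ≤ (i : ℕ)), breg φ φ' 0 (p i) := by
  have hlow : ∀ i ∈ Finset.univ.filter (fun i : Fin V => (i : ℕ) < m),
      Function.update q ⟨m, hm⟩ γ i = q i := by
    intro i hi
    refine Function.update_of_ne ?_ _ _
    rintro rfl
    simp at hi
  refine csInf_le (topValues_bddBelow hp0 hconv hderiv (m + 1))
    ⟨Function.update q ⟨m, hm⟩ γ, fun i => ?_, ?_, ?_⟩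
  · by_cases h : i = ⟨m, hm⟩
    · subst h; simpa using hγ
    · rw [Function.update_of_ne h]; exact hq i
  · rw [sum_filter_lt_succ hm, Finset.sum_congr rfl hlow, Function.update_self, hsum]
  · rw [sum_filter_lt_succ hm, Function.update_self]
    congr 2
    exact Finset.sum_congr rfl fun i hi => by rw [hlow i hi]

/-- The exchange step: values attained with supports `m` and `m + 2` average to at least the loss
at `m + 1`. -/
lemma two_mul_primalTopLoss_le {V m : ℕ} {φ φ' : ℝ → ℝ} {p : Fin V → ℝ}
    (hp0 : ∀ i, p i ∈ Set.Icc (0:ℝ) 1) (hsorted : ∀ i j : Fin V, i ≤ j → p j ≤ p i)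
    (hconv : ConvexOn ℝ (Set.Icc 0 1) φ)
    (hderiv : ∀ x ∈ Set.Icc (0:ℝ) 1, HasDerivWithinAt φ (φ' x) (Set.Icc 0 1) x)
    (hm : m + 1 < V) {r s : ℝ} (hr : r ∈ topValues φ φ' p (m + 2)) (hs : s ∈ topValues φ φ' p m) :
    2 * primalTopLoss φ φ' p (m + 1) ≤ r + s := by
  obtain ⟨u, hu, hu1, rfl⟩ := hr
  obtain ⟨w, hw, hw1, rfl⟩ := hs
  have hm' : m < V := by omega
  rw [sum_filter_lt_succ hm, sum_filter_lt_succ hm'] at hu1 ⊢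
  rw [sum_filter_ge hm', sum_filter_ge hm]
  have hα := hu ⟨m, hm'⟩
  have hβ := hu ⟨m + 1, hm⟩
  set α := u ⟨m, hm'⟩
  set β := u ⟨m + 1, hm⟩
  obtain ⟨t, ht0, ht1, ht⟩ : ∃ t : ℝ, 0 ≤ t ∧ t ≤ 1 ∧ (1 - t) * (α + β) = α := by
    rcases (add_nonneg hα.1 hβ.1).eq_or_lt with h | h
    · -- if `α + β = 0` then `α = 0` and any `t` works
      exact ⟨0, le_rfl, zero_le_one, by linarith [hα.1, hβ.1]⟩
    · refine ⟨β / (α + β), div_nonneg hβ.1 h.le, (div_le_one h).2 (by linarith [hα.1]), ?_⟩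
      field_simp
      ring
  have h1 := primalTopLoss_succ_le hp0 hconv hderiv hm' (fun i => t * w i + (1 - t) * u i)
    (fun i => mix_mem (hw i) (hu i) ht0 ht1) hα (by
      rw [Finset.sum_add_distrib, ← Finset.mul_sum, ← Finset.mul_sum, hw1]
      linear_combination (1 - t) * hu1 - ht)
  have h2 := primalTopLoss_succ_le hp0 hconv hderiv hm' (fun i => (1 - t) * w i + t * u i)
    (fun i => by
      have := mix_mem (hw i) (hu i) (sub_nonneg.2 ht1) (sub_le_self 1 ht0)
      rwa [sub_sub_cancel] at this) hβ (by
      rw [Finset.sum_add_distrib, ← Finset.mul_sum, ← Finset.mul_sum, hw1]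
      linear_combination t * hu1 + ht)
  have h3 := Finset.sum_le_sum fun i (_ : i ∈ Finset.univ.filter (fun i : Fin V => (i : ℕ) < m)) =>
    breg_mix_le (φ' := φ') (y := p i) hconv (hw i) (hu i) ht0 ht1
  rw [Finset.sum_add_distrib, Finset.sum_add_distrib] at h3
  have h4 := breg_swap_le hconv hderiv (hp0 ⟨m, hm'⟩) (hp0 ⟨m + 1, hm⟩)
    (hsorted _ _ (by simp [Fin.le_def])) hβ.1
  rw [sum_filter_ge hm] at h1 h2
  linarith

/-- Discrete convexity of the primal cost. For `V ≥ 3`, `p ∈ Δ_V` sorted in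
non-increasing order, a primal valid `φ`, and `λ ≥ 0`, the regularized cost satisfies
`cost(k+1) − 2·cost(k) + cost(k−1) ≥ 0` for every `k ∈ {2,…,V−1}`. -/
theorem primal_cost_discretely_convex
    (V : ℕ) (hV : 3 ≤ V)
    (p : Fin V → ℝ) (hp0 : ∀ i, p i ∈ Set.Icc (0:ℝ) 1) (hp1 : (∑ i, p i) = 1)
    (hsorted : ∀ i j : Fin V, i ≤ j → p j ≤ p i)
    (φ φ' : ℝ → ℝ)
    (hconv : ConvexOn ℝ (Set.Icc 0 1) φ)
    (hderiv : ∀ x ∈ Set.Icc (0:ℝ) 1, HasDerivWithinAt φ (φ' x) (Set.Icc 0 1) x)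
    (hcont : ContinuousOn φ' (Set.Icc 0 1))
    (hstrict : StrictConvexOn ℝ (Set.Ioo 0 1) φ)
    (lam : ℝ) (hlam : 0 ≤ lam)
    (k : ℕ) (hk2 : 2 ≤ k) (hkV : k + 1 ≤ V) :
    0 ≤ primalCost φ φ' p lam (k + 1) - 2 * primalCost φ φ' p lam k
        + primalCost φ φ' p lam (k - 1) := by
  obtain ⟨m, rfl⟩ : ∃ m, k = m + 1 := ⟨k - 1, by omega⟩
  have key : 2 * primalTopLoss φ φ' p (m + 1)
      ≤ primalTopLoss φ φ' p (m + 2) + primalTopLoss φ φ' p m := by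
    have h : ∀ s ∈ topValues φ φ' p m,
        2 * primalTopLoss φ φ' p (m + 1) - s ≤ primalTopLoss φ φ' p (m + 2) := fun s hs =>
      le_csInf (topValues_nonempty φ φ' p (by omega) (by omega)) fun r hr => by
        linarith [two_mul_primalTopLoss_le hp0 hsorted hconv hderiv (by omega) hr hs]
    have h' : 2 * primalTopLoss φ φ' p (m + 1) - primalTopLoss φ φ' p (m + 2)
        ≤ primalTopLoss φ φ' p m :=
      le_csInf (topValues_nonempty φ φ' p (by omega) (by omega)) fun s hs => by
        linarith [h s hs]
    linarith
  simp only [primalCost, Nat.add_sub_cancel]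
  push_cast
  linarith
end

section
/- Let k ≥ 1 and let p ∈ (0,1]^k with Σ_{j=1}^k p_j ≤ 1, and suppose the maximal entry is attained at a unique index i*, i.e. p_{i*} > pᵢ for all i ≠ i*. Set δ = 1 − Σ_{j=1}^k p_j. For each β < 0, let ν_β be the unique real number with ν_β > −minᵢ pᵢ^β such that Σᵢ (pᵢ^β + ν_β)^{1/β} = 1. Then as β → −∞: (pᵢ^β + ν_β)^{1/β} → pᵢ for every i ≠ i*, and (p_{i*}^β + ν_β)^{1/β} → p_{i*} + δ. That is, the primal Bregman α-renormalization converges, as α → −∞, to the map that assigns all leftover mass 1 − Σ_j p_j to the unique largest coordinate and leaves the others unchanged. -/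
/-!
The constraint forces `ν_β ≤ 0`: for `β < 0` the map `x ↦ x ^ (1/β)` is decreasing, so `ν_β > 0`
would make every coordinate smaller than `pᵢ` and the sum smaller than `1`. The lower bound
`ν_β > -p_{i*}^β` then squeezes, for `i ≠ i*`,
`pᵢ ≤ (pᵢ^β + ν_β)^{1/β} ≤ (pᵢ^β - p_{i*}^β)^{1/β} = pᵢ (1 - (p_{i*}/pᵢ)^β)^{1/β}`,
and the right side tends to `pᵢ` because `p_{i*}/pᵢ > 1` (`tendsto_rpow_sub_rpow`). The coordinate
`i*` is one minus the sum of the others, so its limit follows.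
-/

open Finset Set Filter

lemma rpow_rpow_one_div {a β : ℝ} (ha : 0 < a) (hβ : β < 0) : (a ^ β) ^ (1 / β) = a := by
  rw [one_div, Real.rpow_rpow_inv ha.le hβ.ne]

/-- In the regime `β → -∞`, subtracting the `β`-th power of a larger number is negligible. -/
lemma tendsto_rpow_sub_rpow {a b : ℝ} (ha : 0 < a) (hab : a < b) :
    Tendsto (fun β : ℝ => (a ^ β - b ^ β) ^ (1 / β)) atBot (nhds a) := by
  have hb : 0 < b := ha.trans hab
  have h1 : Tendsto (fun β : ℝ => (b / a) ^ β) atBot (nhds 0) :=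
    tendsto_rpow_atBot_of_base_gt_one _ ((one_lt_div ha).2 hab)
  have h2 : Tendsto (fun β : ℝ => 1 - (b / a) ^ β) atBot (nhds 1) := by
    simpa using h1.const_sub 1
  have h3 : Tendsto (fun β : ℝ => 1 / β) atBot (nhds 0) := by
    simpa using tendsto_inv_atBot_zero (𝕜 := ℝ)
  have h4 : Tendsto (fun β : ℝ => a * (1 - (b / a) ^ β) ^ (1 / β)) atBot (nhds a) := by
    simpa using (h2.rpow h3 (Or.inl one_ne_zero)).const_mul a
  refine h4.congr' ?_
  filter_upwards [eventually_lt_atBot 0] with β hβ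
  have hle : (b / a) ^ β ≤ 1 :=
    Real.rpow_le_one_of_one_le_of_nonpos ((one_lt_div ha).2 hab).le hβ.le
  have hpow : 0 < a ^ β := Real.rpow_pos_of_pos ha β
  have : a ^ β - b ^ β = a ^ β * (1 - (b / a) ^ β) := by
    rw [Real.div_rpow hb.le ha.le]
    field_simp
  rw [this, Real.mul_rpow hpow.le (sub_nonneg.2 hle), rpow_rpow_one_div ha hβ]

/-- The `α → −∞` limit of primal Bregman α-renormalization. Let
`p ∈ (0,1]^k` with `Σ pⱼ ≤ 1` and a unique largest entry at `i*`. For each `β < 0`,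
let `ν_β` satisfy `ν_β > −minᵢ pᵢ^β` (equivalently `−pᵢ^β < ν_β` for all `i`) and
`Σᵢ (pᵢ^β + ν_β)^{1/β} = 1`. Then as `β → −∞`, `(pᵢ^β + ν_β)^{1/β} → pᵢ` for `i ≠ i*`,
while `(p_{i*}^β + ν_β)^{1/β} → p_{i*} + (1 − Σⱼ pⱼ)`. -/
theorem alpha_neg_infinity_limit
    (k : ℕ) (hk : 1 ≤ k) (p : Fin k → ℝ)
    (hp : ∀ i, p i ∈ Set.Ioc (0:ℝ) 1) (hsum : (∑ j, p j) ≤ 1)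
    (istar : Fin k) (hmax : ∀ i, i ≠ istar → p i < p istar)
    (ν : ℝ → ℝ)
    (hν : ∀ β : ℝ, β < 0 →
      (∀ i, -(p i ^ β) < ν β) ∧ (∑ i, (p i ^ β + ν β) ^ (1/β)) = 1) :
    (∀ i, i ≠ istar →
      Filter.Tendsto (fun β : ℝ => (p i ^ β + ν β) ^ (1/β))
        Filter.atBot (nhds (p i))) ∧
    Filter.Tendsto (fun β : ℝ => (p istar ^ β + ν β) ^ (1/β))
      Filter.atBot (nhds (p istar + (1 - ∑ j, p j))) := by
  have hpos : ∀ i, 0 < p i := fun i => (hp i).1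
  have hν0 : ∀ β : ℝ, β < 0 → ν β ≤ 0 := by
    intro β hβ
    by_contra! hc
    have hlt : ∑ i, (p i ^ β + ν β) ^ (1 / β) < ∑ i, p i := by
      refine Finset.sum_lt_sum_of_nonempty ⟨istar, Finset.mem_univ _⟩ fun i _ => ?_
      calc (p i ^ β + ν β) ^ (1 / β) < (p i ^ β) ^ (1 / β) :=
            Real.rpow_lt_rpow_of_neg (Real.rpow_pos_of_pos (hpos i) β) (by linarith)
              (one_div_neg.2 hβ)
        _ = p i := rpow_rpow_one_div (hpos i) hβ
    linarith [(hν β hβ).2]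
  have hother : ∀ i, i ≠ istar →
      Tendsto (fun β : ℝ => (p i ^ β + ν β) ^ (1 / β)) atBot (nhds (p i)) := by
    intro i hi
    refine tendsto_of_tendsto_of_tendsto_of_le_of_le' tendsto_const_nhds
      (tendsto_rpow_sub_rpow (hpos i) (hmax i hi)) ?_ ?_
    · filter_upwards [eventually_lt_atBot 0] with β hβ
      calc p i = (p i ^ β) ^ (1 / β) := (rpow_rpow_one_div (hpos i) hβ).symm
        _ ≤ _ := Real.rpow_le_rpow_of_nonpos (by linarith [(hν β hβ).1 i])
              (by linarith [hν0 β hβ]) (one_div_neg.2 hβ).le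
    · filter_upwards [eventually_lt_atBot 0] with β hβ
      have hlt : p istar ^ β < p i ^ β := Real.rpow_lt_rpow_of_neg (hpos i) (hmax i hi) hβ
      exact Real.rpow_le_rpow_of_nonpos (by linarith) (by linarith [(hν β hβ).1 istar])
        (one_div_neg.2 hβ).le
  refine ⟨hother, ?_⟩
  have hlim : Tendsto
      (fun β : ℝ => 1 - ∑ i ∈ Finset.univ.erase istar, (p i ^ β + ν β) ^ (1 / β)) atBot
      (nhds (1 - ∑ i ∈ Finset.univ.erase istar, p i)) :=
    (tendsto_finsetSum _ fun i hi => hother i (Finset.ne_of_mem_erase hi)).const_sub 1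
  have hval : p istar + (1 - ∑ j, p j) = 1 - ∑ i ∈ Finset.univ.erase istar, p i := by
    rw [← Finset.add_sum_erase _ _ (Finset.mem_univ istar)]
    ring
  rw [hval]
  refine hlim.congr' ?_
  filter_upwards [eventually_lt_atBot 0] with β hβ
  have h := (hν β hβ).2
  rw [← Finset.add_sum_erase _ _ (Finset.mem_univ istar)] at h
  linarith
end
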